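/- Let P_i and P_j be real 3×4 matrices of rank 3 with distinct centers. Then the linear map from the 9-dimensional space of real 3×3 matrices to the space of real 4×4 matrices given by F ↦ P_jᵀ F P_i + P_iᵀ Fᵀ P_j has a one-dimensional kernel, namely the span of 𝓕(P_i, P_j); equivalently, this linear map has rank 8. -/

import Mathlib

open Matrix

/-- The fundamental matrix of a camera pair `(P, Q)` of `3 × 4` matrices:
its `(h,k)` entry is `(-1)^(h+k)` times the determinant of the `4 × 4` matrix
obtained by stacking the rows of `P` other than row `k` (in their original order)
on top of the rows of `Q` other than row `h` (in their original order). -/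
def fund {K : Type*} [CommRing K] (P Q : Matrix (Fin 3) (Fin 4) K) :
    Matrix (Fin 3) (Fin 3) K :=
  Matrix.of fun h k =>
    (-1 : K) ^ ((h : ℕ) + (k : ℕ)) *
      (Matrix.of fun r c : Fin 4 =>
          if hr : (r : ℕ) < 2 then P (k.succAbove ⟨(r : ℕ), hr⟩) c
          else Q (h.succAbove ⟨(r : ℕ) - 2, by have := r.isLt; omega⟩) c).det

/-- The linear map `F ↦ Pjᵀ F Pi + Piᵀ Fᵀ Pj` from `3 × 3` matrices to `4 × 4`
matrices (the epipolar constraint, linear in the fundamental matrix). -/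
def epiMap (Pi Pj : Matrix (Fin 3) (Fin 4) ℝ) :
    Matrix (Fin 3) (Fin 3) ℝ →ₗ[ℝ] Matrix (Fin 4) (Fin 4) ℝ where
  toFun F := Pjᵀ * F * Pi + Piᵀ * Fᵀ * Pj
  map_add' F G := by
    simp [Matrix.transpose_add, Matrix.add_mul, Matrix.mul_add]
    abel
  map_smul' c F := by
    simp [Matrix.transpose_smul, Matrix.smul_mul, Matrix.mul_smul, smul_add]

/-!
The group of triples `(M, N, B)` of invertible matrices acts on camera pairs by
`(P, Q) ↦ (M P B, N Q B)`. Up to a unit, both the fundamental matrix and the kernel of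
`F ↦ Qᵀ F P + Pᵀ Fᵀ Q` are pulled back along `F ↦ Nᵀ F M`: for the fundamental matrix this is the
multiplicativity of the determinant for `B`, and for `M` and `N` the identity
`Nᵀ (N u × N v) = det N • (u × v)`, because a Laplace expansion writes the fundamental matrix
through cross products of columns. In a basis containing the two distinct centers, the pair
becomes a pair of coordinate projections, for which the kernel is read off entry by entry.
-/

section CommRing

variable {R : Type*} [CommRing R]

theorem transpose_mulVec_cross_mulVec (N : Matrix (Fin 3) (Fin 3) R) (u v : Fin 3 → R) :
    Nᵀ *ᵥ ((N *ᵥ u) ⨯₃ (N *ᵥ v)) = N.det • (u ⨯₃ v) := by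
  refine dotProduct_eq _ _ fun w ↦ ?_
  calc
    (Nᵀ *ᵥ ((N *ᵥ u) ⨯₃ (N *ᵥ v))) ⬝ᵥ w = (N *ᵥ w) ⬝ᵥ ((N *ᵥ u) ⨯₃ (N *ᵥ v)) := by
      rw [dotProduct_comm, dotProduct_mulVec, vecMul_transpose]
    _ = (of ![N *ᵥ w, N *ᵥ u, N *ᵥ v]).det := triple_product_eq_det _ _ _
    _ = (of ![w, u, v] * Nᵀ).det := by
      simp only [cons_mul, vecMul_transpose, Equiv.symm_apply_apply, empty_mul]
    _ = N.det * (w ⬝ᵥ (u ⨯₃ v)) := by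
      rw [det_mul, det_transpose, mul_comm, triple_product_eq_det]
      rfl
    _ = (N.det • (u ⨯₃ v)) ⬝ᵥ w := by
      rw [smul_dotProduct, dotProduct_comm, smul_eq_mul]

theorem cross_apply_eq_succAbove (u v : Fin 3 → R) (k : Fin 3) :
    (u ⨯₃ v) k = (-1) ^ (k : ℕ) *
      (u (k.succAbove 0) * v (k.succAbove 1) - u (k.succAbove 1) * v (k.succAbove 0)) := by
  fin_cases k <;> simp [cross_apply, Fin.succAbove]

theorem det_fin_four_laplace (A : Matrix (Fin 4) (Fin 4) R) :
    A.det =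
      (A 0 0 * A 1 1 - A 0 1 * A 1 0) * (A 2 2 * A 3 3 - A 2 3 * A 3 2) -
      (A 0 0 * A 1 2 - A 0 2 * A 1 0) * (A 2 1 * A 3 3 - A 2 3 * A 3 1) +
      (A 0 0 * A 1 3 - A 0 3 * A 1 0) * (A 2 1 * A 3 2 - A 2 2 * A 3 1) +
      (A 0 1 * A 1 2 - A 0 2 * A 1 1) * (A 2 0 * A 3 3 - A 2 3 * A 3 0) -
      (A 0 1 * A 1 3 - A 0 3 * A 1 1) * (A 2 0 * A 3 2 - A 2 2 * A 3 0) +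
      (A 0 2 * A 1 3 - A 0 3 * A 1 2) * (A 2 0 * A 3 1 - A 2 1 * A 3 0) := by
  rw [det_succ_row_zero, Fin.sum_univ_four]
  simp only [det_fin_three, submatrix_apply, Fin.isValue, Fin.succ_zero_eq_one,
    Fin.succ_one_eq_two, Fin.reduceSucc, Fin.succAbove, Fin.reduceCastSucc, Fin.castSucc_zero,
    Fin.castSucc_one, Fin.reduceLT, ↓reduceIte, Fin.coe_ofNat_eq_mod]
  ring

theorem fund_apply (P Q : Matrix (Fin 3) (Fin 4) R) (h k : Fin 3) :
    fund P Q h k = (-1) ^ ((h : ℕ) + (k : ℕ)) *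
      (of ![P (k.succAbove 0), P (k.succAbove 1), Q (h.succAbove 0), Q (h.succAbove 1)]).det := by
  rw [fund, of_apply]
  congr 2
  ext r c
  fin_cases r <;> rfl

theorem fund_eq_sum_vecMulVec_cross (P Q : Matrix (Fin 3) (Fin 4) R) :
    fund P Q =
      vecMulVec (Q.col 2 ⨯₃ Q.col 3) (P.col 0 ⨯₃ P.col 1) -
      vecMulVec (Q.col 1 ⨯₃ Q.col 3) (P.col 0 ⨯₃ P.col 2) +
      vecMulVec (Q.col 1 ⨯₃ Q.col 2) (P.col 0 ⨯₃ P.col 3) +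
      vecMulVec (Q.col 0 ⨯₃ Q.col 3) (P.col 1 ⨯₃ P.col 2) -
      vecMulVec (Q.col 0 ⨯₃ Q.col 2) (P.col 1 ⨯₃ P.col 3) +
      vecMulVec (Q.col 0 ⨯₃ Q.col 1) (P.col 2 ⨯₃ P.col 3) := by
  ext h k
  rw [fund_apply, det_fin_four_laplace]
  simp only [of_apply, cons_val, Matrix.add_apply, Matrix.sub_apply, vecMulVec_apply,
    cross_apply_eq_succAbove, col_apply]
  ring

theorem transpose_mul_fund_mul_mul (M N : Matrix (Fin 3) (Fin 3) R)
    (P Q : Matrix (Fin 3) (Fin 4) R) :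
    Nᵀ * fund (M * P) (N * Q) * M = (M.det * N.det) • fund P Q := by
  have vecMulVec_cross (a b c d : Fin 4) :
      Nᵀ * vecMulVec ((N * Q).col a ⨯₃ (N * Q).col b) ((M * P).col c ⨯₃ (M * P).col d) * M =
        (M.det * N.det) • vecMulVec (Q.col a ⨯₃ Q.col b) (P.col c ⨯₃ P.col d) := by
    have col_mul (A : Matrix (Fin 3) (Fin 3) R) (B : Matrix (Fin 3) (Fin 4) R) (j : Fin 4) :
        (A * B).col j = A *ᵥ B.col j := rfl
    rw [mul_vecMulVec, vecMulVec_mul, ← mulVec_transpose]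
    simp only [col_mul, transpose_mulVec_cross_mulVec, smul_vecMulVec, vecMulVec_smul, smul_smul]
  simp only [fund_eq_sum_vecMulVec_cross, Matrix.mul_add, Matrix.mul_sub, Matrix.add_mul,
    Matrix.sub_mul, smul_add, smul_sub, vecMulVec_cross]

theorem fund_mul_right (P Q : Matrix (Fin 3) (Fin 4) R) (B : Matrix (Fin 4) (Fin 4) R) :
    fund (P * B) (Q * B) = B.det • fund P Q := by
  ext h k
  simp only [fund, of_apply, Matrix.smul_apply, smul_eq_mul]
  rw [mul_left_comm, mul_comm B.det, ← det_mul]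
  congr 2
  ext r c
  simp only [of_apply, mul_apply]
  split_ifs <;> rfl

section EpipolarMap

variable {l m n : Type*} [Fintype l] [Fintype m]

/-- The map `F ↦ Qᵀ F P + Pᵀ Fᵀ Q`, which generalizes `epiMap` to matrices of any size over a
commutative ring. -/
def epipolarMap (P : Matrix m n R) (Q : Matrix l n R) : Matrix l m R →ₗ[R] Matrix n n R where
  toFun F := Qᵀ * F * P + Pᵀ * Fᵀ * Q
  map_add' F G := by
    simp only [transpose_add, Matrix.add_mul, Matrix.mul_add]
    abel
  map_smul' c F := by
    simp only [transpose_smul, Matrix.smul_mul, Matrix.mul_smul, smul_add, RingHom.id_apply]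

theorem epipolarMap_apply (P : Matrix m n R) (Q : Matrix l n R) (F : Matrix l m R) :
    epipolarMap P Q F = Qᵀ * F * P + Pᵀ * Fᵀ * Q :=
  rfl

theorem epipolarMap_mul_left (M : Matrix m m R) (N : Matrix l l R) (P : Matrix m n R)
    (Q : Matrix l n R) (F : Matrix l m R) :
    epipolarMap (M * P) (N * Q) F = epipolarMap P Q (Nᵀ * F * M) := by
  simp only [epipolarMap_apply, transpose_mul, transpose_transpose, Matrix.mul_assoc]

theorem epipolarMap_mul_right [Fintype n] (P : Matrix m n R) (Q : Matrix l n R)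
    (B : Matrix n n R) (F : Matrix l m R) :
    epipolarMap (P * B) (Q * B) F = Bᵀ * epipolarMap P Q F * B := by
  simp only [epipolarMap_apply, transpose_mul, Matrix.mul_add, Matrix.add_mul, Matrix.mul_assoc]

theorem ker_epipolarMap_mul_right [Fintype n] [DecidableEq n] (P : Matrix m n R)
    (Q : Matrix l n R) {B : Matrix n n R} (hB : IsUnit B) :
    LinearMap.ker (epipolarMap (P * B) (Q * B)) = LinearMap.ker (epipolarMap P Q) := by
  ext F
  rw [LinearMap.mem_ker, LinearMap.mem_ker, epipolarMap_mul_right, hB.mul_left_eq_zero,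
    ((isUnit_transpose B).2 hB).mul_right_eq_zero]

end EpipolarMap

theorem ker_epipolarMap_mul_left_eq_span {M N : Matrix (Fin 3) (Fin 3) R}
    {P Q : Matrix (Fin 3) (Fin 4) R} (hM : IsUnit M) (hN : IsUnit N)
    (h : LinearMap.ker (epipolarMap P Q) = Submodule.span R {fund P Q}) :
    LinearMap.ker (epipolarMap (M * P) (N * Q)) = Submodule.span R {fund (M * P) (N * Q)} := by
  set G := fund (M * P) (N * Q)
  let Φ := LinearMap.mulLeftRight R (Nᵀ, M)
  have Φ_injective : Function.Injective Φ :=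
    hM.mul_left_injective.comp ((isUnit_transpose N).2 hN).mul_right_injective
  have det_isUnit : IsUnit (M.det * N.det) :=
    ((isUnit_iff_isUnit_det M).1 hM).mul ((isUnit_iff_isUnit_det N).1 hN)
  have Φ_fund : Φ G = (M.det * N.det) • fund P Q := transpose_mul_fund_mul_mul M N P Q
  calc
    LinearMap.ker (epipolarMap (M * P) (N * Q)) = (LinearMap.ker (epipolarMap P Q)).comap Φ := by
      ext F
      exact Eq.congr_left (epipolarMap_mul_left M N P Q F)
    _ = (Submodule.span R {Φ G}).comap Φ := by
      rw [h, Φ_fund, Submodule.span_singleton_smul_eq det_isUnit]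
    _ = Submodule.span R {G} := by
      rw [← Set.image_singleton, ← Submodule.map_span,
        Submodule.comap_map_eq_of_injective Φ_injective]

theorem ker_epipolarMap_mul_right_eq_span {P Q : Matrix (Fin 3) (Fin 4) R}
    {B : Matrix (Fin 4) (Fin 4) R} (hB : IsUnit B)
    (h : LinearMap.ker (epipolarMap P Q) = Submodule.span R {fund P Q}) :
    LinearMap.ker (epipolarMap (P * B) (Q * B)) = Submodule.span R {fund (P * B) (Q * B)} := by
  rw [ker_epipolarMap_mul_right P Q hB, h, fund_mul_right,
    Submodule.span_singleton_smul_eq ((isUnit_iff_isUnit_det B).1 hB)]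

theorem fund_mul_mul_ne_zero {M N : Matrix (Fin 3) (Fin 3) R} {P Q : Matrix (Fin 3) (Fin 4) R}
    {B : Matrix (Fin 4) (Fin 4) R} (hM : IsUnit M) (hN : IsUnit N) (hB : IsUnit B)
    (h : fund P Q ≠ 0) : fund (M * P * B) (N * Q * B) ≠ 0 := by
  intro h0
  have det_isUnit : IsUnit (M.det * N.det) :=
    ((isUnit_iff_isUnit_det M).1 hM).mul ((isUnit_iff_isUnit_det N).1 hN)
  rw [fund_mul_right, ((isUnit_iff_isUnit_det B).1 hB).smul_eq_zero] at h0
  refine h (det_isUnit.smul_eq_zero.1 ?_)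
  rw [← transpose_mul_fund_mul_mul, h0, Matrix.mul_zero, Matrix.zero_mul]

/-- The camera that drops the `j`-th coordinate; its center is the `j`-th coordinate point. -/
def coordinateCamera (R : Type*) [CommRing R] (j : Fin 4) : Matrix (Fin 3) (Fin 4) R :=
  (1 : Matrix (Fin 4) (Fin 4) R).submatrix j.succAbove id

theorem eq_submatrix_mul_coordinateCamera {m : Type*} {A : Matrix m (Fin 4) R} {j : Fin 4}
    (h : A.col j = 0) : A = A.submatrix id j.succAbove * coordinateCamera R j := by
  ext i k
  have hij : A i j = 0 := congrFun h i
  calc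
    A i k = (A * (1 : Matrix (Fin 4) (Fin 4) R)) i k := by rw [Matrix.mul_one]
    _ = (A.submatrix id j.succAbove * coordinateCamera R j) i k := by
      rw [mul_apply, Fin.sum_univ_succAbove _ j, hij, zero_mul, zero_add, mul_apply]
      rfl

theorem coordinateCamera_three : coordinateCamera R 3 =
    !![1, 0, 0, 0;
       0, 1, 0, 0;
       0, 0, 1, 0] := by
  ext i j
  fin_cases i <;> fin_cases j <;> simp [coordinateCamera, Fin.succAbove, one_apply]

theorem coordinateCamera_two : coordinateCamera R 2 =
    !![1, 0, 0, 0;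
       0, 1, 0, 0;
       0, 0, 0, 1] := by
  ext i j
  fin_cases i <;> fin_cases j <;> simp [coordinateCamera, Fin.succAbove, one_apply]

theorem fund_coordinateCamera : fund (coordinateCamera R 3) (coordinateCamera R 2) =
    !![0, 1, 0;
       -1, 0, 0;
       0, 0, 0] := by
  rw [coordinateCamera_three, coordinateCamera_two, fund_eq_sum_vecMulVec_cross]
  ext h k
  fin_cases h <;> fin_cases k <;> simp [cross_apply]

theorem fund_coordinateCamera_ne_zero [Nontrivial R] :
    fund (coordinateCamera R 3) (coordinateCamera R 2) ≠ 0 := by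
  intro h
  have h01 := congrFun (congrFun h 0) 1
  rw [fund_coordinateCamera] at h01
  exact one_ne_zero h01

theorem epipolarMap_coordinateCamera (F : Matrix (Fin 3) (Fin 3) R) :
    epipolarMap (coordinateCamera R 3) (coordinateCamera R 2) F =
      !![2 * F 0 0,         F 0 1 + F 1 0, F 0 2, F 2 0;
         F 0 1 + F 1 0, 2 * F 1 1,         F 1 2, F 2 1;
         F 0 2,             F 1 2,         0,     F 2 2;
         F 2 0,             F 2 1,         F 2 2, 0] := by
  rw [epipolarMap_apply, coordinateCamera_three, coordinateCamera_two]
  ext i j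
  fin_cases i <;> fin_cases j <;>
    simp [mul_apply, Fin.sum_univ_three, two_mul, add_comm]

theorem ker_epipolarMap_coordinateCamera [NoZeroDivisors R] (h2 : (2 : R) ≠ 0) :
    LinearMap.ker (epipolarMap (coordinateCamera R 3) (coordinateCamera R 2)) =
      Submodule.span R {fund (coordinateCamera R 3) (coordinateCamera R 2)} := by
  ext F
  rw [LinearMap.mem_ker, epipolarMap_coordinateCamera, Submodule.mem_span_singleton,
    fund_coordinateCamera]
  constructor
  · intro h
    have h00 : 2 * F 0 0 = 0 := congrFun (congrFun h 0) 0
    have h01 : F 0 1 + F 1 0 = 0 := congrFun (congrFun h 0) 1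
    have h02 : F 0 2 = 0 := congrFun (congrFun h 0) 2
    have h20 : F 2 0 = 0 := congrFun (congrFun h 0) 3
    have h11 : 2 * F 1 1 = 0 := congrFun (congrFun h 1) 1
    have h12 : F 1 2 = 0 := congrFun (congrFun h 1) 2
    have h21 : F 2 1 = 0 := congrFun (congrFun h 1) 3
    have h22 : F 2 2 = 0 := congrFun (congrFun h 2) 3
    refine ⟨F 0 1, .trans ?_ (eta_fin_three F).symm⟩
    simp [(mul_eq_zero_iff_left h2).1 h00, eq_neg_of_add_eq_zero_right h01, h02, h20,
      (mul_eq_zero_iff_left h2).1 h11, h12, h21, h22]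
  · rintro ⟨c, rfl⟩
    ext i j
    fin_cases i <;> fin_cases j <;> simp

end CommRing

section Field

variable {K : Type*} [Field K]

theorem exists_mulVec_eq_zero_and_mulVec_ne_zero {l m n : Type*} [Fintype n]
    {P : Matrix m n K} {Q : Matrix l n K} (hr : P.rank ≤ Q.rank)
    (hker : LinearMap.ker P.mulVecLin ≠ LinearMap.ker Q.mulVecLin) :
    ∃ x, P *ᵥ x = 0 ∧ Q *ᵥ x ≠ 0 := by
  by_contra! h
  refine hker (Submodule.eq_of_le_of_finrank_le (fun x hx ↦ h x hx) ?_)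
  have hP := P.mulVecLin.finrank_range_add_finrank_ker
  have hQ := Q.mulVecLin.finrank_range_add_finrank_ker
  rw [Matrix.rank, Matrix.rank] at hr
  lia

theorem linearIndependent_pair_of_mulVec {l m n : Type*} [Fintype n] {P : Matrix m n K}
    {Q : Matrix l n K} {x y : n → K} (hPx : P *ᵥ x = 0) (hQx : Q *ᵥ x ≠ 0)
    (hQy : Q *ᵥ y = 0) (hPy : P *ᵥ y ≠ 0) : LinearIndependent K ![y, x] := by
  rw [LinearIndependent.pair_iff]
  intro s t hst
  have hP := congrArg (P *ᵥ ·) hst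
  have hQ := congrArg (Q *ᵥ ·) hst
  simp only [mulVec_add, mulVec_smul, mulVec_zero, hPx, hQy, smul_zero, add_zero, zero_add,
    smul_eq_zero, hQx, hPy, or_false] at hP hQ
  exact ⟨hP, hQ⟩

theorem exists_isUnit_col_eq {y x : Fin 4 → K} (h : LinearIndependent K ![y, x]) :
    ∃ B : Matrix (Fin 4) (Fin 4) K, IsUnit B ∧ B.col 2 = y ∧ B.col 3 = x := by
  obtain ⟨b, hb⟩ := exists_linearIndependent_cons_of_lt_finrank h (by simp)
  obtain ⟨a, ha⟩ := exists_linearIndependent_cons_of_lt_finrank hb (by simp)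
  exact ⟨(of ![a, b, y, x])ᵀ,
    (isUnit_transpose _).2 (linearIndependent_rows_iff_isUnit.1 ha), rfl, rfl⟩

theorem isUnit_of_rank_mul_eq_card {m n : Type*} [Fintype m] [DecidableEq m] [Fintype n]
    {M : Matrix m m K} {A : Matrix m n K} (h : (M * A).rank = Fintype.card m) : IsUnit M := by
  rw [← mulVec_surjective_iff_isUnit]
  refine LinearMap.range_eq_top.1 (Submodule.eq_top_of_finrank_eq (S := M.mulVecLin.range) ?_)
  rw [Module.finrank_fintype_fun_eq_card]
  exact M.rank_le_card_width.antisymm (h ▸ rank_mul_le_left M A)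

theorem exists_isUnit_eq_mul_coordinateCamera {A : Matrix (Fin 3) (Fin 4) K} {j : Fin 4}
    (hA : A.rank = 3) (h : A.col j = 0) :
    ∃ M : Matrix (Fin 3) (Fin 3) K, IsUnit M ∧ A = M * coordinateCamera K j := by
  have hfactor := eq_submatrix_mul_coordinateCamera h
  refine ⟨_, isUnit_of_rank_mul_eq_card (A := coordinateCamera K j) ?_, hfactor⟩
  rw [← hfactor, hA, Fintype.card_fin]

theorem exists_eq_mul_coordinateCamera_mul {P Q : Matrix (Fin 3) (Fin 4) K} (hP : P.rank = 3)
    (hQ : Q.rank = 3) (hc : LinearMap.ker P.mulVecLin ≠ LinearMap.ker Q.mulVecLin) :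
    ∃ (M N : Matrix (Fin 3) (Fin 3) K) (B : Matrix (Fin 4) (Fin 4) K),
      IsUnit M ∧ IsUnit N ∧ IsUnit B ∧
        P = M * coordinateCamera K 3 * B ∧ Q = N * coordinateCamera K 2 * B := by
  obtain ⟨x, hPx, hQx⟩ := exists_mulVec_eq_zero_and_mulVec_ne_zero (hP.trans hQ.symm).le hc
  obtain ⟨y, hQy, hPy⟩ := exists_mulVec_eq_zero_and_mulVec_ne_zero (hQ.trans hP.symm).le hc.symm
  -- A basis ending with the centers of `Q` and `P`: in it one column of each camera vanishes.
  obtain ⟨C, hC, rfl, rfl⟩ :=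
    exists_isUnit_col_eq (linearIndependent_pair_of_mulVec hPx hQx hQy hPy)
  have hCdet : IsUnit C.det := (isUnit_iff_isUnit_det C).1 hC
  obtain ⟨M, hM, hPC⟩ := exists_isUnit_eq_mul_coordinateCamera (A := P * C) (j := 3)
    ((rank_mul_eq_left_of_isUnit_det C P hCdet).trans hP) hPx
  obtain ⟨N, hN, hQC⟩ := exists_isUnit_eq_mul_coordinateCamera (A := Q * C) (j := 2)
    ((rank_mul_eq_left_of_isUnit_det C Q hCdet).trans hQ) hQy
  refine ⟨M, N, C⁻¹, hM, hN, isUnit_nonsing_inv_iff.2 hC, ?_, ?_⟩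
  · rw [← hPC, mul_nonsing_inv_cancel_right C P hCdet]
  · rw [← hQC, mul_nonsing_inv_cancel_right C Q hCdet]

theorem rank_add_one_eq_of_ker_eq_span_singleton {V W : Type*} [AddCommGroup V] [Module K V]
    [FiniteDimensional K V] [AddCommGroup W] [Module K W] {f : V →ₗ[K] W} {v : V} (hv : v ≠ 0)
    (h : LinearMap.ker f = Submodule.span K {v}) : f.rank + 1 = Module.finrank K V := by
  rw [LinearMap.rank, ← Module.finrank_eq_rank, ← f.finrank_range_add_finrank_ker, h,
    finrank_span_singleton hv, Nat.cast_add, Nat.cast_one]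

theorem epiMap_ker_and_rank_general (h2 : (2 : K) ≠ 0) {P Q : Matrix (Fin 3) (Fin 4) K}
    (hP : P.rank = 3) (hQ : Q.rank = 3)
    (hc : LinearMap.ker P.mulVecLin ≠ LinearMap.ker Q.mulVecLin) :
    LinearMap.ker (epipolarMap P Q) = Submodule.span K {fund P Q} ∧
      LinearMap.rank (epipolarMap P Q) = 8 := by
  obtain ⟨M, N, B, hM, hN, hB, rfl, rfl⟩ := exists_eq_mul_coordinateCamera_mul hP hQ hc
  have hker := ker_epipolarMap_mul_right_eq_span hB
    (ker_epipolarMap_mul_left_eq_span hM hN (ker_epipolarMap_coordinateCamera h2))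
  have hne := fund_mul_mul_ne_zero hM hN hB fund_coordinateCamera_ne_zero
  refine ⟨hker, Cardinal.add_one_inj.1 ?_⟩
  rw [rank_add_one_eq_of_ker_eq_span_singleton hne hker, Module.finrank_matrix]
  norm_num

end Field

/-- for cameras `Pi`, `Pj` (rank-3) with distinct centers, the linear
map `F ↦ Pjᵀ F Pi + Piᵀ Fᵀ Pj` has one-dimensional kernel, namely the span of the
fundamental matrix `𝓕(Pi, Pj)`; equivalently, it has rank 8. -/
theorem epiMap_ker_and_rank (Pi Pj : Matrix (Fin 3) (Fin 4) ℝ)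
    (hi : Pi.rank = 3) (hj : Pj.rank = 3)
    (hc : LinearMap.ker Pi.mulVecLin ≠ LinearMap.ker Pj.mulVecLin) :
    LinearMap.ker (epiMap Pi Pj) = Submodule.span ℝ {fund Pi Pj} ∧
      LinearMap.rank (epiMap Pi Pj) = 8 :=
  epiMap_ker_and_rank_general two_ne_zero hi hj hc
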